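/- arXiv:2411.14447 — 5 statements merged into one kernel-verified Lean document; each statement's English description precedes it below -/
import Mathlib

section
/- Let f : ℕ → ℝ satisfy |f(n)| ≤ 1 for all n, suppose the series ∑_{n=1}^∞ f(n)·n^{-1/2-t'} converges for every t' > 0, and define F(t) = ∫_1^∞ S_x · x^{-1-t} dx for t > 0. If there is X₀ ≥ 1 such that S_x ≥ 0 for all x ≥ X₀, then F(t) ≥ F(2t) − 8·√X₀ for every t > 0. -/
open MeasureTheory Filter Finset Topology

/-- The partial sums `S_x = ∑_{n ≤ x} f(n) / √n`. -/
noncomputable def S (f : ℕ → ℝ) (x : ℝ) : ℝ :=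
  ∑ n ∈ Finset.Icc 1 ⌊x⌋₊, f n / Real.sqrt n

lemma S_sqrt_bound (f : ℕ → ℝ) (hf : ∀ n, |f n| ≤ 1) (N : ℕ) :
    |∑ n ∈ Finset.Icc 1 N, f n / Real.sqrt n| ≤ 2 * Real.sqrt N := by
  induction N with
  | zero => simp
  | succ k ih =>
    rw [Finset.sum_Icc_succ_top (by omega)]
    have h1 := abs_add_le (∑ n ∈ Finset.Icc 1 k, f n / Real.sqrt n)
      (f (k+1) / Real.sqrt ((k+1 : ℕ) : ℝ))
    have hp : 0 < Real.sqrt ((k+1 : ℕ) : ℝ) := Real.sqrt_pos.2 (by positivity)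
    have h2 : |f (k+1) / Real.sqrt ((k+1 : ℕ) : ℝ)| ≤ 1 / Real.sqrt ((k+1 : ℕ) : ℝ) := by
      rw [abs_div, abs_of_pos hp]
      gcongr
      exact hf _
    have h3 : 1 / Real.sqrt ((k+1 : ℕ) : ℝ) ≤
        2 * Real.sqrt ((k+1 : ℕ) : ℝ) - 2 * Real.sqrt (k : ℝ) := by
      rw [div_le_iff₀ hp]
      have e1 : Real.sqrt ((k+1 : ℕ) : ℝ) ^ 2 = k + 1 := by
        rw [Real.sq_sqrt (by positivity)]; push_cast; ring
      have e2 : Real.sqrt (k : ℝ) ^ 2 = k := Real.sq_sqrt (by positivity)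
      nlinarith [sq_nonneg (Real.sqrt ((k+1 : ℕ) : ℝ) - Real.sqrt (k : ℝ))]
    linarith

lemma S_abel (f : ℕ → ℝ) (s B : ℝ) (hs : 0 < s)
    (hB : ∀ N : ℕ, |∑ n ∈ Finset.Icc 1 N, f n * (n : ℝ) ^ (-(1 / 2 : ℝ) - s)| ≤ B) (N : ℕ) :
    |∑ n ∈ Finset.Icc 1 N, f n / Real.sqrt n
      - (N : ℝ) ^ s * ∑ n ∈ Finset.Icc 1 N, f n * (n : ℝ) ^ (-(1 / 2 : ℝ) - s)|
      ≤ B * (N : ℝ) ^ s := by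
  induction N with
  | zero => simp [Real.zero_rpow hs.ne']
  | succ k ih =>
    have hA := hB k
    rw [Finset.sum_Icc_succ_top (by omega), Finset.sum_Icc_succ_top (by omega)]
    set A := ∑ n ∈ Finset.Icc 1 k, f n * (n : ℝ) ^ (-(1 / 2 : ℝ) - s)
    set T := ∑ n ∈ Finset.Icc 1 k, f n / Real.sqrt n
    have hk : (0 : ℝ) < ((k + 1 : ℕ) : ℝ) := by positivity
    have e : ((k + 1 : ℕ) : ℝ) ^ s * ((k + 1 : ℕ) : ℝ) ^ (-(1 / 2 : ℝ) - s)
        = (Real.sqrt ((k + 1 : ℕ) : ℝ))⁻¹ := by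
      rw [← Real.rpow_add hk, Real.sqrt_eq_rpow, ← Real.rpow_neg hk.le]
      congr 1; ring
    have hm : (k : ℝ) ^ s ≤ ((k + 1 : ℕ) : ℝ) ^ s :=
      Real.rpow_le_rpow (by positivity) (by push_cast; linarith) hs.le
    have e2 : T + f (k + 1) / Real.sqrt ((k + 1 : ℕ) : ℝ) - ((k + 1 : ℕ) : ℝ) ^ s *
        (A + f (k + 1) * ((k + 1 : ℕ) : ℝ) ^ (-(1 / 2 : ℝ) - s))
        = (T - (k : ℝ) ^ s * A) - (((k + 1 : ℕ) : ℝ) ^ s - (k : ℝ) ^ s) * A := by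
      rw [div_eq_mul_inv, ← e]; ring
    rw [e2]
    refine (abs_sub _ _).trans ?_
    rw [abs_mul, abs_of_nonneg (sub_nonneg.2 hm)]
    have := mul_le_mul_of_nonneg_left hA (sub_nonneg.2 hm)
    linarith

lemma S_integrable (f : ℕ → ℝ)
    (hconv : ∀ t' : ℝ, 0 < t' → ∃ L : ℝ,
      Tendsto (fun N => ∑ n ∈ Finset.Icc 1 N, f n * (n : ℝ) ^ (-(1 / 2 : ℝ) - t'))
        atTop (𝓝 L)) (t : ℝ) (ht : 0 < t) :
    IntegrableOn (fun x => S f x * x ^ (-1 - t)) (Set.Ici (1 : ℝ)) := by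
  obtain ⟨L, hL⟩ := hconv (t / 2) (by linarith)
  obtain ⟨B, hB⟩ := (Metric.isBounded_range_of_tendsto _ hL).exists_norm_le
  have hB' : ∀ N : ℕ, |∑ n ∈ Finset.Icc 1 N, f n * (n : ℝ) ^ (-(1 / 2 : ℝ) - t / 2)| ≤ B :=
    fun N => hB _ ⟨N, rfl⟩
  have hB0 : 0 ≤ B := (abs_nonneg _).trans (hB' 0)
  have hint : IntegrableOn (fun x : ℝ => 2 * B * x ^ (-1 - t / 2)) (Set.Ici (1 : ℝ)) := by
    rw [integrableOn_Ici_iff_integrableOn_Ioi]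
    exact (integrableOn_Ioi_rpow_of_lt (by linarith) one_pos).const_mul _
  have hmeas : Measurable (S f) := by
    have : S f = (fun N : ℕ => ∑ n ∈ Finset.Icc 1 N, f n / Real.sqrt n) ∘ fun x : ℝ => ⌊x⌋₊ := rfl
    rw [this]
    exact measurable_from_nat.comp Nat.measurable_floor
  refine Integrable.mono' hint (by fun_prop) ?_
  filter_upwards [ae_restrict_mem measurableSet_Ici] with x hx
  have hx1 : (1 : ℝ) ≤ x := hx
  have hx0 : (0 : ℝ) < x := by linarith
  rw [Real.norm_eq_abs, abs_mul, abs_of_nonneg (Real.rpow_nonneg hx0.le _)]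
  have h1 := S_abel f (t / 2) B (by linarith) hB' ⌊x⌋₊
  have h2 := hB' ⌊x⌋₊
  have hp : (0 : ℝ) ≤ (⌊x⌋₊ : ℝ) ^ (t / 2) := by positivity
  have h3 : |S f x| ≤ 2 * B * (⌊x⌋₊ : ℝ) ^ (t / 2) := by
    unfold S
    rw [abs_le] at *
    constructor <;> nlinarith [mul_le_mul_of_nonneg_left h2.1 hp, mul_le_mul_of_nonneg_left h2.2 hp]
  have h4 : (⌊x⌋₊ : ℝ) ^ (t / 2) ≤ x ^ (t / 2) :=
    Real.rpow_le_rpow (by positivity) (Nat.floor_le hx0.le) (by linarith)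
  have h5 : |S f x| ≤ 2 * B * x ^ (t / 2) :=
    h3.trans (mul_le_mul_of_nonneg_left h4 (by linarith))
  calc |S f x| * x ^ (-1 - t) ≤ 2 * B * x ^ (t / 2) * x ^ (-1 - t) :=
        mul_le_mul_of_nonneg_right h5 (Real.rpow_nonneg hx0.le _)
    _ = 2 * B * x ^ (-1 - t / 2) := by
        rw [mul_assoc, ← Real.rpow_add hx0]; congr 2; ring

/-- If `|f| ≤ 1`, the Dirichlet series `∑ f(n) n^{-1/2-t'}` converges for every `t' > 0`,
`F(t) = ∫_1^∞ S_x x^{-1-t} dx`, and `S_x ≥ 0` for all `x ≥ X₀` (with `X₀ ≥ 1`), then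
`F(t) ≥ F(2t) - 8 √X₀` for every `t > 0`. -/
theorem F_ge_F_two_t (f : ℕ → ℝ) (hf : ∀ n, |f n| ≤ 1)
    (hconv : ∀ t' : ℝ, 0 < t' → ∃ L : ℝ,
      Tendsto (fun N => ∑ n ∈ Finset.Icc 1 N, f n * (n : ℝ) ^ (-(1 / 2 : ℝ) - t'))
        atTop (𝓝 L))
    (F : ℝ → ℝ)
    (hF : ∀ t : ℝ, 0 < t → F t = ∫ x in Set.Ici (1 : ℝ), S f x * x ^ (-1 - t))
    (X₀ : ℝ) (hX₀ : 1 ≤ X₀) (hpos : ∀ x : ℝ, X₀ ≤ x → 0 ≤ S f x) :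
    ∀ t : ℝ, 0 < t → F (2 * t) - 8 * Real.sqrt X₀ ≤ F t := by
  intro t ht
  have i1 := S_integrable f hconv t ht
  have i2 := S_integrable f hconv (2 * t) (by linarith)
  set h : ℝ → ℝ := (Set.Ioc 1 X₀).indicator (fun x => 2 * x ^ (-(1 / 2) : ℝ)) with hh
  have hi : IntervalIntegrable (fun x : ℝ => 2 * x ^ (-(1 / 2) : ℝ)) volume 1 X₀ :=
    (intervalIntegral.intervalIntegrable_rpow' (by norm_num)).const_mul _
  have hi' : IntegrableOn (fun x : ℝ => 2 * x ^ (-(1 / 2) : ℝ)) (Set.Ioc 1 X₀) :=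
    (intervalIntegrable_iff_integrableOn_Ioc_of_le hX₀).1 hi
  have i3 : IntegrableOn h (Set.Ici 1) :=
    ((integrable_indicator_iff measurableSet_Ioc).2 hi').integrableOn
  have hval : ∫ x in Set.Ici (1 : ℝ), h x = 4 * (Real.sqrt X₀ - 1) := by
    rw [hh, setIntegral_indicator measurableSet_Ioc,
      Set.inter_eq_right.2 (show Set.Ioc 1 X₀ ⊆ Set.Ici 1 from fun x hx => le_of_lt hx.1),
      ← intervalIntegral.integral_of_le hX₀, intervalIntegral.integral_const_mul,
      integral_rpow (Or.inl (by norm_num)), Real.sqrt_eq_rpow]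
    norm_num
    ring
  have key : ∫ x in Set.Ici (1 : ℝ), S f x * x ^ (-1 - 2 * t) ≤
      ∫ x in Set.Ici (1 : ℝ), (S f x * x ^ (-1 - t) + h x) := by
    refine integral_mono_ae i2 (i1.add i3) ?_
    have hne : ∀ᵐ x : ℝ ∂(volume.restrict (Set.Ici 1)), x ≠ 1 :=
      ae_restrict_of_ae (Measure.ae_ne volume 1)
    filter_upwards [ae_restrict_mem measurableSet_Ici, hne] with x hx hx'
    have hx1 : (1 : ℝ) < x := lt_of_le_of_ne hx (Ne.symm hx')
    have hx0 : (0 : ℝ) < x := by linarith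
    have m1 : x ^ (-1 - 2 * t) ≤ x ^ (-1 - t) :=
      Real.rpow_le_rpow_of_exponent_le hx1.le (by linarith)
    have m0 : 0 < x ^ (-1 - 2 * t) := Real.rpow_pos_of_pos hx0 _
    have m2 : x ^ (-1 - t) ≤ x ^ (-1 : ℝ) :=
      Real.rpow_le_rpow_of_exponent_le hx1.le (by linarith)
    by_cases hxX : x ≤ X₀
    · have hv : h x = 2 * x ^ (-(1 / 2) : ℝ) := Set.indicator_of_mem (show x ∈ Set.Ioc 1 X₀ from ⟨hx1, hxX⟩) _
      have hS : |S f x| ≤ 2 * x ^ (1 / 2 : ℝ) := by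
        rw [← Real.sqrt_eq_rpow]
        refine (S_sqrt_bound f hf ⌊x⌋₊).trans ?_
        gcongr
        exact Nat.floor_le hx0.le
      have e : x ^ (1 / 2 : ℝ) * x ^ (-1 : ℝ) = x ^ (-(1 / 2) : ℝ) := by
        rw [← Real.rpow_add hx0]; norm_num
      have h1 : S f x * (x ^ (-1 - 2 * t) - x ^ (-1 - t)) ≤
          (2 * x ^ (1 / 2 : ℝ)) * x ^ (-1 : ℝ) := by
        refine (le_abs_self _).trans ?_
        rw [abs_mul]
        refine mul_le_mul hS ?_ (abs_nonneg _) (by positivity)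
        rw [abs_le]
        constructor <;> linarith
      show S f x * x ^ (-1 - 2 * t) ≤ S f x * x ^ (-1 - t) + h x
      rw [hv, ← e]
      linarith
    · have hv : h x = 0 := Set.indicator_of_notMem (fun hc => hxX hc.2) _
      show S f x * x ^ (-1 - 2 * t) ≤ S f x * x ^ (-1 - t) + h x
      rw [hv, add_zero]
      exact mul_le_mul_of_nonneg_left m1 (hpos x (by linarith))
  rw [integral_add i1 i3, hval, ← hF t ht, ← hF (2 * t) (by linarith)] at key
  have := Real.sqrt_nonneg X₀
  linarith
end

section
/- There exist real constants c₀ and C > 0 such that for all t ∈ (0, 1], |∑_p p^{-1-t} − log(1/t) − c₀| ≤ C·t, where the sum runs over all primes p. -/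
open Filter Topology

/-- The remainder `h x = -log (1 - x) - x`. -/
noncomputable def psaH (x : ℝ) : ℝ := -Real.log (1 - x) - x

lemma psaH_diff {x y : ℝ} (hx : 0 ≤ x) (hxy : x ≤ y) (hy : y ≤ 1 / 2) :
    0 ≤ psaH y - psaH x ∧ psaH y - psaH x ≤ 2 * y * (y - x) := by
  have h1 : 0 < 1 - y := by linarith
  have h2 : 0 < 1 - x := by linarith
  have key : psaH y - psaH x = Real.log ((1 - x) / (1 - y)) - (y - x) := by
    rw [Real.log_div h2.ne' h1.ne']; unfold psaH; ring
  have key2 : psaH y - psaH x = -Real.log ((1 - y) / (1 - x)) - (y - x) := by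
    rw [Real.log_div h1.ne' h2.ne']; unfold psaH; ring
  constructor
  · rw [key2]
    have := Real.log_le_sub_one_of_pos (div_pos h1 h2)
    have h3 : (1 - y) / (1 - x) ≤ 1 - (y - x) := by
      rw [div_le_iff₀ h2]; nlinarith [mul_nonneg hx (sub_nonneg.2 hxy)]
    linarith
  · rw [key]
    have := Real.log_le_sub_one_of_pos (div_pos h2 h1)
    have h3 : (1 - x) / (1 - y) ≤ 1 + (y - x) + 2 * y * (y - x) := by
      rw [div_le_iff₀ h1]
      nlinarith [mul_nonneg (mul_nonneg (hx.trans hxy) (sub_nonneg.2 hxy))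
        (by linarith : 0 ≤ 1 - 2 * y)]
    linarith

lemma psa_inv_le (p : Nat.Primes) : ((p : ℕ) : ℝ)⁻¹ ≤ 1 / 2 := by
  have : (2 : ℝ) ≤ (p : ℕ) := by exact_mod_cast p.2.two_le
  rw [one_div]
  exact inv_anti₀ (by norm_num) this

lemma psa_rpow_le (p : Nat.Primes) {t : ℝ} (ht : 0 ≤ t) :
    ((p : ℕ) : ℝ) ^ (-1 - t) ≤ ((p : ℕ) : ℝ)⁻¹ := by
  have : (1 : ℝ) ≤ (p : ℕ) := by exact_mod_cast p.2.one_lt.le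
  rw [← Real.rpow_neg_one]
  exact Real.rpow_le_rpow_of_exponent_le this (by linarith)

lemma psa_summable {t : ℝ} (ht : 0 ≤ t) :
    Summable (fun p : Nat.Primes => psaH (((p : ℕ) : ℝ) ^ (-1 - t))) := by
  have hs : Summable (fun p : Nat.Primes => 2 * ((p : ℕ) : ℝ) ^ (-2 : ℝ)) :=
    (Nat.Primes.summable_rpow.2 (by norm_num)).mul_left 2
  refine Summable.of_nonneg_of_le (fun p => ?_) (fun p => ?_) hs
  · have h0 : (0 : ℝ) ≤ ((p : ℕ) : ℝ) ^ (-1 - t) := by positivity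
    have := (psaH_diff le_rfl h0 ((psa_rpow_le p ht).trans (psa_inv_le p))).1
    simpa [psaH] using this
  · have h0 : (0 : ℝ) ≤ ((p : ℕ) : ℝ) ^ (-1 - t) := by positivity
    have := (psaH_diff le_rfl h0 ((psa_rpow_le p ht).trans (psa_inv_le p))).2
    have h1 : psaH 0 = 0 := by simp [psaH]
    have h2 : ((p : ℕ) : ℝ) ^ (-2 : ℝ) = (((p : ℕ) : ℝ)⁻¹) * (((p : ℕ) : ℝ)⁻¹) := by
      rw [Real.rpow_neg (by positivity)]; norm_num [sq]
    rw [h1, sub_zero, sub_zero] at this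
    rw [h2]
    have := mul_le_mul (psa_rpow_le p ht) (psa_rpow_le p ht) h0 (h0.trans (psa_rpow_le p ht))
    linarith

lemma psa_diff_le (p : Nat.Primes) {t : ℝ} (ht : 0 ≤ t) :
    psaH (((p : ℕ) : ℝ) ^ (-1 - (0 : ℝ))) - psaH (((p : ℕ) : ℝ) ^ (-1 - t)) ≤
      t * (4 * ((p : ℕ) : ℝ) ^ (-(3 / 2) : ℝ)) := by
  have hp : (0 : ℝ) < (p : ℕ) := by exact_mod_cast p.2.pos
  have e0 : ((p : ℕ) : ℝ) ^ (-1 - (0 : ℝ)) = ((p : ℕ) : ℝ)⁻¹ := by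
    rw [sub_zero, Real.rpow_neg_one]
  rw [e0]
  have h0 : (0 : ℝ) ≤ ((p : ℕ) : ℝ) ^ (-1 - t) := by positivity
  have h := (psaH_diff h0 (psa_rpow_le p ht) (psa_inv_le p)).2
  refine h.trans ?_
  set q : ℝ := ((p : ℕ) : ℝ) with hq
  have e1 : q ^ (-1 - t) = q⁻¹ * q ^ (-t) := by
    rw [sub_eq_add_neg, Real.rpow_add hp, Real.rpow_neg_one]
  have e2 : 1 - q ^ (-t) ≤ t * Real.log q := by
    rw [Real.rpow_def_of_pos hp]
    have := Real.add_one_le_exp (Real.log q * -t)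
    linarith
  have e3 : Real.log q ≤ 2 * q ^ (1 / 2 : ℝ) := by
    have := Real.log_le_rpow_div hp.le (show (0 : ℝ) < 1 / 2 by norm_num)
    linarith
  have e4 : q ^ (-(3 / 2) : ℝ) = q⁻¹ * q⁻¹ * q ^ (1 / 2 : ℝ) := by
    rw [← Real.rpow_neg_one, ← Real.rpow_add hp, ← Real.rpow_add hp]; norm_num
  rw [e1, e4]
  have e5 : 1 - q ^ (-t) ≤ t * (2 * q ^ (1 / 2 : ℝ)) :=
    e2.trans (mul_le_mul_of_nonneg_left e3 ht)
  have := mul_le_mul_of_nonneg_left e5 (show 0 ≤ 2 * (q⁻¹ * q⁻¹) by positivity)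
  linarith

lemma psa_log_zeta {t : ℝ} (ht : 0 < t) :
    Real.log (riemannZeta ((1 + t : ℝ) : ℂ)).re =
      ∑' p : Nat.Primes, (((p : ℕ) : ℝ) ^ (-1 - t) + psaH (((p : ℕ) : ℝ) ^ (-1 - t))) := by
  rw [← riemannZeta_eulerProduct_exp_log (s := ((1 + t : ℝ) : ℂ))
    (by rw [Complex.ofReal_re]; linarith)]
  have : ∀ p : Nat.Primes, -Complex.log (1 - ((p : ℕ) : ℂ) ^ (-((1 + t : ℝ) : ℂ))) =
      ((((p : ℕ) : ℝ) ^ (-1 - t) + psaH (((p : ℕ) : ℝ) ^ (-1 - t)) : ℝ) : ℂ) := by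
    intro p
    have h1 : ((p : ℕ) : ℝ) ^ (-1 - t) ≤ 1 / 2 := (psa_rpow_le p ht.le).trans (psa_inv_le p)
    have h2 : ((p : ℕ) : ℂ) ^ (-((1 + t : ℝ) : ℂ)) = ((((p : ℕ) : ℝ) ^ (-1 - t) : ℝ) : ℂ) := by
      rw [Complex.ofReal_cpow (by positivity)]
      congr 1
      push_cast; ring
    rw [h2, ← Complex.ofReal_one, ← Complex.ofReal_sub, ← Complex.ofReal_log (by linarith),
      ← Complex.ofReal_neg]
    congr 1
    unfold psaH; ring
  rw [tsum_congr this, ← Complex.ofReal_tsum, Complex.exp_ofReal_re, Real.log_exp]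

lemma psa_zeta_bound : ∃ C : ℝ, ∀ t : ℝ, 0 < t → t ≤ 1 →
    |Real.log (riemannZeta ((1 + t : ℝ) : ℂ)).re + Real.log t| ≤ C * t := by
  let f : ℝ → ℝ := fun s => Real.log (riemannZeta₁ (s : ℂ)).re
  have hpos : ∀ s ∈ Set.Icc (1 : ℝ) 2, (riemannZeta₁ (s : ℂ)).re ≠ 0 := by
    intro s hs
    rcases hs.1.eq_or_lt with h | h
    · rw [← h]; simp
    · have h1 := riemannZeta_eq_inv_sub_mul (s := (s : ℂ))
        (by exact_mod_cast h.ne')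
      have h2 := riemannZeta_re_pos_of_one_lt h
      intro h0
      rw [h1, ← Complex.ofReal_one, ← Complex.ofReal_sub, ← Complex.ofReal_inv,
        Complex.re_ofReal_mul, h0, mul_zero] at h2
      exact lt_irrefl _ h2
  have hd : ∀ s ∈ Set.Icc (1 : ℝ) 2, DifferentiableAt ℝ f s := by
    intro s hs
    have h0 := hpos s hs
    have : Differentiable ℝ riemannZeta₀ := by fun_prop
    have : Differentiable ℝ riemannZeta₁ := by fun_prop
    simp only [f]
    fun_prop (disch := exact h0)
  have hc : ContinuousOn (dslope f 1) (Set.Icc 1 2) := by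
    intro s hs
    refine ContinuousAt.continuousWithinAt ?_
    rcases eq_or_ne s 1 with h | h
    · rw [h]; exact continuousAt_dslope_same.2 (hd 1 (by simp))
    · exact (continuousAt_dslope_of_ne h).2 (hd s hs).continuousAt
  obtain ⟨C, hC⟩ := isCompact_Icc.exists_bound_of_continuousOn hc
  refine ⟨C, fun t ht ht1 => ?_⟩
  have h1 := log_riemannZeta_eq_neg_log_sub_add_ofReal
    (s := 1 + t) (by linarith)
  have h2 : Real.log (riemannZeta ((1 + t : ℝ) : ℂ)).re + Real.log t = f (1 + t) := by
    rw [h1]; simp [f]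
  have h3 := sub_smul_dslope f 1 (1 + t)
  have h4 : f 1 = 0 := by simp [f]
  rw [h2]
  rw [h4, sub_zero, smul_eq_mul, add_sub_cancel_left] at h3
  rw [← h3, abs_mul, abs_of_pos ht, mul_comm]
  exact mul_le_mul_of_nonneg_right (hC _ ⟨by linarith, by linarith⟩) ht.le

/-- There are constants `c₀` and `C > 0` with
`|∑_p p^{-1-t} - log(1/t) - c₀| ≤ C t` for all `t ∈ (0, 1]`. -/
theorem prime_sum_asymptotic :
    ∃ c₀ C : ℝ, 0 < C ∧ ∀ t : ℝ, 0 < t → t ≤ 1 →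
      |(∑' p : Nat.Primes, ((p : ℕ) : ℝ) ^ (-1 - t)) - Real.log (1 / t) - c₀| ≤ C * t := by
  obtain ⟨C₁, hC₁⟩ := psa_zeta_bound
  have hS : Summable (fun p : Nat.Primes => 4 * ((p : ℕ) : ℝ) ^ (-(3 / 2) : ℝ)) :=
    (Nat.Primes.summable_rpow.2 (by norm_num)).mul_left 4
  set S := ∑' p : Nat.Primes, 4 * ((p : ℕ) : ℝ) ^ (-(3 / 2) : ℝ) with hSdef
  refine ⟨-∑' p : Nat.Primes, psaH (((p : ℕ) : ℝ) ^ (-1 - (0 : ℝ))), |C₁| + |S| + 1,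
    by positivity, fun t ht ht1 => ?_⟩
  have hz := psa_log_zeta ht
  rw [Summable.tsum_add (Nat.Primes.summable_rpow.2 (by linarith)) (psa_summable ht.le)] at hz
  have hb := abs_le.1 (hC₁ t ht ht1)
  have hsub := (psa_summable le_rfl).tsum_sub (psa_summable ht.le)
  have hlow : 0 ≤ ∑' p : Nat.Primes, (psaH (((p : ℕ) : ℝ) ^ (-1 - (0 : ℝ))) -
      psaH (((p : ℕ) : ℝ) ^ (-1 - t))) := by
    refine tsum_nonneg fun p => ?_
    have e0 : ((p : ℕ) : ℝ) ^ (-1 - (0 : ℝ)) = ((p : ℕ) : ℝ)⁻¹ := by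
      rw [sub_zero, Real.rpow_neg_one]
    rw [e0]
    exact (psaH_diff (by positivity) (psa_rpow_le p ht.le) (psa_inv_le p)).1
  have hup : ∑' p : Nat.Primes, (psaH (((p : ℕ) : ℝ) ^ (-1 - (0 : ℝ))) -
      psaH (((p : ℕ) : ℝ) ^ (-1 - t))) ≤ t * S := by
    rw [hSdef, ← tsum_mul_left]
    exact Summable.tsum_le_tsum (fun p => psa_diff_le p ht.le)
      ((psa_summable le_rfl).sub (psa_summable ht.le)) (hS.mul_left t)
  have hl : Real.log (1 / t) = -Real.log t := by rw [one_div, Real.log_inv]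
  have a1 : C₁ * t ≤ |C₁| * t := mul_le_mul_of_nonneg_right (le_abs_self _) ht.le
  have a2 : S * t ≤ |S| * t := mul_le_mul_of_nonneg_right (le_abs_self _) ht.le
  have a3 : 0 ≤ |S| * t := by positivity
  rw [hl, abs_le]
  constructor <;> linarith
end

section
/- There exists a constant C > 0 such that for all t ∈ (0, 1/4], |∑_p (p^{-1/2-t} − p^{-1/2-2t})² − (log(1/(2t)) + log(1/(4t)) − 2·log(1/(3t)))| ≤ C·t, where the sum runs over all primes. In particular, ∑_p (p^{-1/2-t} − p^{-1/2-2t})² → log(9/8) as t → 0⁺. -/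
open Filter Topology

/-- The higher prime power part of `-log (1 - x)`. -/
noncomputable def gAux (x : ℝ) : ℝ := -Real.log (1 - x) - x

lemma gAux_diff {x y : ℝ} (hy : 0 ≤ y) (hyx : y ≤ x) (hx : x ≤ 1 / 2) :
    |gAux x - gAux y| ≤ 2 * x * (x - y) := by
  unfold gAux
  have hx1 : 0 < 1 - x := by linarith
  have hy1 : 0 < 1 - y := by linarith
  have h1 := Real.log_le_sub_one_of_pos (div_pos hy1 hx1)
  have h2 := Real.log_le_sub_one_of_pos (div_pos hx1 hy1)
  rw [Real.log_div hy1.ne' hx1.ne'] at h1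
  rw [Real.log_div hx1.ne' hy1.ne'] at h2
  have e1 : (1 - y) / (1 - x) - 1 ≤ (x - y) + 2 * x * (x - y) := by
    rw [sub_le_iff_le_add, div_le_iff₀ hx1]
    nlinarith [mul_nonneg (mul_nonneg (sub_nonneg.2 hyx) (hy.trans hyx)) (by linarith : 0 ≤ 1 - 2 * x)]
  have e2 : (1 - x) / (1 - y) - 1 ≤ -(x - y) := by
    rw [sub_le_iff_le_add, div_le_iff₀ hy1]
    nlinarith [mul_nonneg (sub_nonneg.2 hyx) hy]
  have e3 : 0 ≤ 2 * x * (x - y) := mul_nonneg (by linarith) (sub_nonneg.2 hyx)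
  rw [abs_le]
  constructor <;> linarith

lemma prime_two_le (p : Nat.Primes) : (2 : ℝ) ≤ ((p : ℕ) : ℝ) := by
  exact_mod_cast p.2.two_le

lemma prime_rpow_le (p : Nat.Primes) {s : ℝ} (hs : 1 ≤ s) :
    ((p : ℕ) : ℝ) ^ (-s) ≤ 1 / 2 := by
  have h2 := prime_two_le p
  calc ((p : ℕ) : ℝ) ^ (-s) ≤ ((p : ℕ) : ℝ) ^ (-1 : ℝ) :=
        Real.rpow_le_rpow_of_exponent_le (by linarith) (by linarith)
    _ = 1 / ((p : ℕ) : ℝ) := by rw [Real.rpow_neg_one, one_div]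
    _ ≤ 1 / 2 := one_div_le_one_div_of_le (by norm_num) h2

lemma summable_gAux {s : ℝ} (hs : 1 ≤ s) :
    Summable (fun p : Nat.Primes => gAux (((p : ℕ) : ℝ) ^ (-s))) := by
  have h : Summable (fun p : Nat.Primes => 2 * ((p : ℕ) : ℝ) ^ (-(2 * s))) :=
    (Nat.Primes.summable_rpow.2 (by linarith)).mul_left 2
  refine Summable.of_norm_bounded h (fun p => ?_)
  have hp := prime_two_le p
  have h0 : (0 : ℝ) ≤ ((p : ℕ) : ℝ) ^ (-s) := by positivity
  have := gAux_diff le_rfl h0 (prime_rpow_le p hs)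
  have g0 : gAux 0 = 0 := by simp [gAux]
  rw [g0, sub_zero, sub_zero] at this
  rw [Real.norm_eq_abs]
  refine this.trans (le_of_eq ?_)
  rw [mul_assoc, ← Real.rpow_add (by linarith)]
  ring_nf

/-- The sum of the higher prime power parts. -/
noncomputable def rAux (s : ℝ) : ℝ := ∑' p : Nat.Primes, gAux (((p : ℕ) : ℝ) ^ (-s))

/-- The prime zeta function. -/
noncomputable def pAux (s : ℝ) : ℝ := ∑' p : Nat.Primes, ((p : ℕ) : ℝ) ^ (-s)

lemma rAux_bound : ∃ K : ℝ, ∀ u : ℝ, 0 ≤ u → |rAux (1 + u) - rAux 1| ≤ K * u := by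
  have hS : Summable (fun p : Nat.Primes => 4 * ((p : ℕ) : ℝ) ^ (-(3 / 2) : ℝ)) :=
    (Nat.Primes.summable_rpow.2 (by norm_num)).mul_left 4
  refine ⟨∑' p : Nat.Primes, 4 * ((p : ℕ) : ℝ) ^ (-(3 / 2) : ℝ), fun u hu => ?_⟩
  have hs1 := summable_gAux (s := 1 + u) (by linarith)
  have hs2 := summable_gAux (s := 1) le_rfl
  unfold rAux
  rw [← hs1.tsum_sub hs2, ← tsum_mul_right, ← Real.norm_eq_abs]
  refine tsum_of_norm_bounded (hS.mul_right u).hasSum (fun p => ?_)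
  have hp := prime_two_le p
  have hp0 : (0 : ℝ) < ((p : ℕ) : ℝ) := by linarith
  have hle : ((p : ℕ) : ℝ) ^ (-(1 + u)) ≤ ((p : ℕ) : ℝ) ^ (-1 : ℝ) :=
    Real.rpow_le_rpow_of_exponent_le (by linarith) (by linarith)
  have h := gAux_diff (by positivity) hle (prime_rpow_le p le_rfl)
  rw [Real.norm_eq_abs, abs_sub_comm]
  refine h.trans ?_
  have hexp : 1 - ((p : ℕ) : ℝ) ^ (-u) ≤ Real.log (p : ℕ) * u := by
    rw [Real.rpow_def_of_pos hp0]
    have := Real.add_one_le_exp (Real.log ((p : ℕ) : ℝ) * -u)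
    linarith
  have hlog := Real.log_le_rpow_div hp0.le (ε := 1 / 2) (by norm_num)
  have hsplit : ((p : ℕ) : ℝ) ^ (-(1 + u)) = ((p : ℕ) : ℝ) ^ (-1 : ℝ) * ((p : ℕ) : ℝ) ^ (-u) := by
    rw [← Real.rpow_add hp0]; ring_nf
  have h32 : ((p : ℕ) : ℝ) ^ (-(3 / 2) : ℝ) =
      ((p : ℕ) : ℝ) ^ (-1 : ℝ) * ((p : ℕ) : ℝ) ^ (-1 : ℝ) * ((p : ℕ) : ℝ) ^ (1 / 2 : ℝ) := by
    rw [← Real.rpow_add hp0, ← Real.rpow_add hp0]; norm_num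
  rw [hsplit, h32]
  set x := ((p : ℕ) : ℝ) ^ (-1 : ℝ)
  have hx : 0 ≤ x := by positivity
  calc 2 * x * (x - x * ((p : ℕ) : ℝ) ^ (-u)) = 2 * (x * x) * (1 - ((p : ℕ) : ℝ) ^ (-u)) := by ring
    _ ≤ 2 * (x * x) * ((((p : ℕ) : ℝ) ^ (1 / 2 : ℝ) / (1 / 2)) * u) := by
        gcongr
        exact hexp.trans (mul_le_mul_of_nonneg_right hlog hu)
    _ = _ := by ring

lemma log_zeta_eq {s : ℝ} (hs : 1 < s) :
    Real.log (riemannZeta (s : ℂ)).re = pAux s + rAux s := by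
  rw [← riemannZeta_eulerProduct_exp_log (by simpa using hs)]
  have : (∑' p : Nat.Primes, -Complex.log (1 - (p : ℂ) ^ (-(s : ℂ)))) =
      ((pAux s + rAux s : ℝ) : ℂ) := by
    unfold pAux rAux
    rw [← (Nat.Primes.summable_rpow.2 (by linarith)).tsum_add (summable_gAux hs.le),
      Complex.ofReal_tsum]
    refine tsum_congr fun p => ?_
    have h1 := prime_rpow_le p hs.le
    rw [gAux, add_sub_cancel, Complex.ofReal_neg, Complex.ofReal_log (by linarith)]
    rw [Complex.ofReal_sub, Complex.ofReal_cpow (by positivity)]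
    simp
  rw [this, Complex.exp_ofReal_re, Real.log_exp]

lemma pAux_asymp : ∃ K δ : ℝ, 0 < K ∧ 0 < δ ∧ ∀ u : ℝ, 0 < u → u < δ →
    |pAux (1 + u) + Real.log u + rAux 1| ≤ K * u := by
  obtain ⟨K, hK⟩ := rAux_bound
  obtain ⟨c, hc, hb⟩ := log_riemannZeta_add_log_sub_isBigO_ofReal.exists_pos
  have hb := hb.bound
  rw [eventually_nhdsWithin_iff, Metric.eventually_nhds_iff] at hb
  obtain ⟨δ, hδ, h⟩ := hb
  refine ⟨c + |K|, δ, by positivity, hδ, fun u hu hud => ?_⟩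
  have h1 := @h (1 + u) (by simpa [Real.dist_eq, abs_of_pos hu] using hud) (by simpa using hu)
  rw [log_zeta_eq (by linarith)] at h1
  simp only [add_sub_cancel_left, Real.norm_eq_abs, abs_of_pos hu] at h1
  have h2 := hK u hu.le
  have h3 : K * u ≤ |K| * u := mul_le_mul_of_nonneg_right (le_abs_self K) hu.le
  rw [abs_le] at *
  constructor <;> linarith [h1.1, h1.2, h2.1, h2.2]

lemma term_eq (p : Nat.Primes) (t : ℝ) :
    (((p : ℕ) : ℝ) ^ (-(1 / 2 : ℝ) - t) - ((p : ℕ) : ℝ) ^ (-(1 / 2 : ℝ) - 2 * t)) ^ 2 =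
    ((p : ℕ) : ℝ) ^ (-(1 + 2 * t)) + ((p : ℕ) : ℝ) ^ (-(1 + 4 * t))
      - 2 * ((p : ℕ) : ℝ) ^ (-(1 + 3 * t)) := by
  have hp0 : (0 : ℝ) < ((p : ℕ) : ℝ) := by linarith [prime_two_le p]
  rw [show -(1 + 2 * t) = (-(1 / 2 : ℝ) - t) + (-(1 / 2 : ℝ) - t) by ring,
    show -(1 + 4 * t) = (-(1 / 2 : ℝ) - 2 * t) + (-(1 / 2 : ℝ) - 2 * t) by ring,
    show -(1 + 3 * t) = (-(1 / 2 : ℝ) - t) + (-(1 / 2 : ℝ) - 2 * t) by ring,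
    Real.rpow_add hp0, Real.rpow_add hp0, Real.rpow_add hp0]
  ring

lemma sum_eq {t : ℝ} (ht : 0 < t) :
    (∑' p : Nat.Primes,
      (((p : ℕ) : ℝ) ^ (-(1 / 2 : ℝ) - t) - ((p : ℕ) : ℝ) ^ (-(1 / 2 : ℝ) - 2 * t)) ^ 2) =
    pAux (1 + 2 * t) + pAux (1 + 4 * t) - 2 * pAux (1 + 3 * t) := by
  have h (k : ℝ) (hk : 0 < k) : Summable fun p : Nat.Primes => ((p : ℕ) : ℝ) ^ (-(1 + k * t)) :=
    Nat.Primes.summable_rpow.2 (by nlinarith [mul_pos hk ht])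
  simp only [term_eq]
  unfold pAux
  rw [((h 2 (by norm_num)).add (h 4 (by norm_num))).tsum_sub ((h 3 (by norm_num)).mul_left 2),
    (h 2 (by norm_num)).tsum_add (h 4 (by norm_num)), tsum_mul_left]

lemma pAux_mono {s r : ℝ} (hs : 1 < s) (hr : s ≤ r) : 0 ≤ pAux r ∧ pAux r ≤ pAux s := by
  refine ⟨tsum_nonneg fun p => by positivity, ?_⟩
  refine Summable.tsum_le_tsum (fun p => ?_) (Nat.Primes.summable_rpow.2 (by linarith))
    (Nat.Primes.summable_rpow.2 (by linarith))
  exact Real.rpow_le_rpow_of_exponent_le (by linarith [prime_two_le p]) (by linarith)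

lemma logs_eq {t : ℝ} (ht : 0 < t) :
    Real.log (1 / (2 * t)) + Real.log (1 / (4 * t)) - 2 * Real.log (1 / (3 * t)) =
      Real.log (9 / 8) := by
  have : (9 / 8 : ℝ) = (3 * t) ^ 2 / ((2 * t) * (4 * t)) := by field_simp; norm_num
  simp only [one_div, Real.log_inv]
  rw [this, Real.log_div (by positivity) (by positivity), Real.log_pow,
    Real.log_mul (x := 2 * t) (y := 4 * t) (by positivity) (by positivity)]
  push_cast
  ring

lemma main_bound : ∃ C : ℝ, 0 < C ∧ ∀ t : ℝ, 0 < t → t ≤ 1 / 4 →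
      |(∑' p : Nat.Primes,
          (((p : ℕ) : ℝ) ^ (-(1 / 2 : ℝ) - t) - ((p : ℕ) : ℝ) ^ (-(1 / 2 : ℝ) - 2 * t)) ^ 2) -
        (Real.log (1 / (2 * t)) + Real.log (1 / (4 * t)) - 2 * Real.log (1 / (3 * t)))|
        ≤ C * t := by
  obtain ⟨K, δ, hK, hδ, h⟩ := pAux_asymp
  set M := 2 * pAux (1 + δ / 4) + |Real.log (9 / 8)| with hM
  have hp := pAux_mono (s := 1 + δ / 4) (by linarith) le_rfl
  have hM0 : 0 ≤ M := by have := hp.1; positivity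
  refine ⟨12 * K + M / (δ / 4), by positivity, fun t ht _ => ?_⟩
  rw [sum_eq ht]
  have hKt : 0 < K * t := by positivity
  by_cases hd : t < δ / 4
  · have h2 := h (2 * t) (by linarith) (by linarith)
    have h3 := h (3 * t) (by linarith) (by linarith)
    have h4 := h (4 * t) (by linarith) (by linarith)
    have hM1 : 0 ≤ M / (δ / 4) * t := by positivity
    simp only [one_div, Real.log_inv]
    rw [abs_le] at *
    constructor <;> nlinarith [h2.1, h2.2, h3.1, h3.2, h4.1, h4.2]
  · push Not at hd
    rw [logs_eq ht]
    have hM1 : M ≤ M / (δ / 4) * t := by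
      rw [div_mul_eq_mul_div, le_div_iff₀ (by positivity)]
      exact mul_le_mul_of_nonneg_left hd hM0
    have h2 := pAux_mono (s := 1 + δ / 4) (r := 1 + 2 * t) (by linarith) (by linarith)
    have h3 := pAux_mono (s := 1 + δ / 4) (r := 1 + 3 * t) (by linarith) (by linarith)
    have h4 := pAux_mono (s := 1 + δ / 4) (r := 1 + 4 * t) (by linarith) (by linarith)
    have a1 := le_abs_self (Real.log (9 / 8))
    have a2 := neg_abs_le (Real.log (9 / 8))
    rw [abs_le]
    constructor <;> nlinarith [h2.1, h2.2, h3.1, h3.2, h4.1, h4.2]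

/-- There is a constant `C > 0` such that for all `t ∈ (0, 1/4]`,
`|∑_p (p^{-1/2-t} - p^{-1/2-2t})² - (log(1/(2t)) + log(1/(4t)) - 2 log(1/(3t)))| ≤ C t`;
in particular `∑_p (p^{-1/2-t} - p^{-1/2-2t})² → log(9/8)` as `t → 0⁺`. -/
theorem variance_asymptotic :
    (∃ C : ℝ, 0 < C ∧ ∀ t : ℝ, 0 < t → t ≤ 1 / 4 →
      |(∑' p : Nat.Primes,
          (((p : ℕ) : ℝ) ^ (-(1 / 2 : ℝ) - t) - ((p : ℕ) : ℝ) ^ (-(1 / 2 : ℝ) - 2 * t)) ^ 2) -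
        (Real.log (1 / (2 * t)) + Real.log (1 / (4 * t)) - 2 * Real.log (1 / (3 * t)))|
        ≤ C * t) ∧
    Tendsto (fun t : ℝ => ∑' p : Nat.Primes,
        (((p : ℕ) : ℝ) ^ (-(1 / 2 : ℝ) - t) - ((p : ℕ) : ℝ) ^ (-(1 / 2 : ℝ) - 2 * t)) ^ 2)
      (𝓝[>] 0) (𝓝 (Real.log (9 / 8))) := by
  refine ⟨main_bound, ?_⟩
  obtain ⟨C, hC, h⟩ := main_bound
  rw [tendsto_iff_norm_sub_tendsto_zero]
  have hlim : Tendsto (fun t : ℝ => C * t) (𝓝[>] 0) (𝓝 0) := by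
    have : Tendsto (fun t : ℝ => C * t) (𝓝 0) (𝓝 (C * 0)) := by
      exact (continuous_const.mul continuous_id).tendsto 0
    rw [mul_zero] at this
    exact this.mono_left nhdsWithin_le_nhds
  refine squeeze_zero' (Eventually.of_forall fun _ => norm_nonneg _) ?_ hlim
  filter_upwards [Ioc_mem_nhdsGT (show (0 : ℝ) < 1 / 4 by norm_num)] with t ht
  have := h t ht.1 ht.2
  rwa [logs_eq ht.1] at this
end

section
/- There exists a constant C > 0 such that for all reals t₁, t₂ with 0 < t₂ < t₁ ≤ 1/4, |∑_p (p^{-1/2-t₁} − p^{-1/2-2t₁})(p^{-1/2-t₂} − p^{-1/2-2t₂}) − (log((t₁+2t₂)/(t₁+t₂)) + log((2t₁+t₂)/(2t₁+2t₂)))| ≤ C·t₁, where the sum runs over all primes. -/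
open Filter Topology

open Real in
lemma aux_u {p : ℕ} (hp : p.Prime) {s : ℝ} (hs : 1 ≤ s) :
    0 < (p : ℝ) ^ (-s) ∧ (p : ℝ) ^ (-s) ≤ 1 / 2 ∧ (p : ℝ) ^ (-s) ≤ (p : ℝ)⁻¹ := by
  have h2 : (2 : ℝ) ≤ p := by exact_mod_cast hp.two_le
  have h3 : (p : ℝ) ^ (-s) ≤ (p : ℝ)⁻¹ := by
    rw [← Real.rpow_neg_one]
    exact Real.rpow_le_rpow_of_exponent_le (by linarith) (by linarith)
  refine ⟨by positivity, h3.trans ?_, h3⟩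
  rw [one_div]
  exact inv_anti₀ (by norm_num) h2

lemma aux_phi {u v : ℝ} (hvu : v ≤ u) (hv : 0 ≤ v) (hu : u ≤ 1 / 2) :
    |(-Real.log (1 - u) - u) - (-Real.log (1 - v) - v)| ≤ 2 * u * (u - v) := by
  have h1 : 0 < 1 - u := by linarith
  have h2 : 0 < 1 - v := by linarith
  have hA := Real.log_le_sub_one_of_pos (div_pos h2 h1)
  have hB := Real.log_le_sub_one_of_pos (div_pos h1 h2)
  rw [Real.log_div h2.ne' h1.ne'] at hA
  rw [Real.log_div h1.ne' h2.ne'] at hB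
  have hA' : (1 - v) / (1 - u) - 1 - (u - v) ≤ 2 * u * (u - v) := by
    have : (1 - v) / (1 - u) - 1 - (u - v) = (u - v) * u / (1 - u) := by field_simp; ring
    rw [this, div_le_iff₀ h1]
    nlinarith [mul_nonneg (mul_nonneg (sub_nonneg.2 hvu) (hv.trans hvu)) (by linarith : 0 ≤ 1 - 2 * u)]
  have hB' : (1 - u) / (1 - v) - 1 ≤ -(u - v) := by
    have : (1 - u) / (1 - v) - 1 = -(u - v) / (1 - v) := by field_simp; ring
    rw [this, div_le_iff₀ h2]
    nlinarith [mul_nonneg (sub_nonneg.2 hvu) hv]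
  have h0 : 0 ≤ 2 * u * (u - v) := by
    have := mul_nonneg (hv.trans hvu) (sub_nonneg.2 hvu)
    linarith
  rw [abs_le]
  constructor <;> linarith

lemma aux_term {p : ℕ} (hp : p.Prime) {s t : ℝ} (hs : 1 ≤ s) (hst : s ≤ t) :
    |(-Real.log (1 - (p : ℝ) ^ (-s)) - (p : ℝ) ^ (-s)) -
      (-Real.log (1 - (p : ℝ) ^ (-t)) - (p : ℝ) ^ (-t))| ≤
      4 * (p : ℝ) ^ (-(3 / 2) : ℝ) * (t - s) := by
  obtain ⟨a1, a2, a3⟩ := aux_u hp hs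
  obtain ⟨b1, b2, b3⟩ := aux_u hp (hs.trans hst)
  have h2 : (2 : ℝ) ≤ p := by exact_mod_cast hp.two_le
  have hp0 : (0 : ℝ) < p := by linarith
  have hvu : (p : ℝ) ^ (-t) ≤ (p : ℝ) ^ (-s) :=
    Real.rpow_le_rpow_of_exponent_le (by linarith) (by linarith)
  refine (aux_phi hvu b1.le a2).trans ?_
  have hd : (p : ℝ) ^ (-s) - (p : ℝ) ^ (-t) ≤ (p : ℝ)⁻¹ * ((t - s) * Real.log p) := by
    have e : (p : ℝ) ^ (-t) = (p : ℝ) ^ (-s) * Real.exp (-((t - s) * Real.log p)) := by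
      rw [Real.rpow_def_of_pos hp0, Real.rpow_def_of_pos hp0, ← Real.exp_add]
      congr 1; ring
    have h := Real.add_one_le_exp (-((t - s) * Real.log p))
    have hl : 0 ≤ (t - s) * Real.log p :=
      mul_nonneg (by linarith) (Real.log_nonneg (by linarith))
    calc _ = (p : ℝ) ^ (-s) * (1 - Real.exp (-((t - s) * Real.log p))) := by rw [e]; ring
      _ ≤ (p : ℝ) ^ (-s) * ((t - s) * Real.log p) := by gcongr; linarith
      _ ≤ _ := by gcongr
  have hlog : Real.log p ≤ 2 * (p : ℝ) ^ (1 / 2 : ℝ) := by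
    have := Real.log_le_rpow_div hp0.le (one_half_pos (α := ℝ))
    linarith
  have e3 : (p : ℝ)⁻¹ * ((p : ℝ)⁻¹ * (p : ℝ) ^ (1 / 2 : ℝ)) = (p : ℝ) ^ (-(3 / 2) : ℝ) := by
    rw [← Real.rpow_neg_one, ← Real.rpow_add hp0, ← Real.rpow_add hp0]; norm_num
  have hts : 0 ≤ t - s := by linarith
  calc _ ≤ 2 * (p : ℝ)⁻¹ * ((p : ℝ)⁻¹ * ((t - s) * (2 * (p : ℝ) ^ (1 / 2 : ℝ)))) := by
        gcongr
        · exact hd.trans (by gcongr)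
    _ = 4 * ((p : ℝ)⁻¹ * ((p : ℝ)⁻¹ * (p : ℝ) ^ (1 / 2 : ℝ))) * (t - s) := by ring
    _ = _ := by rw [e3]

lemma aux_summ_u {s : ℝ} (hs : 1 < s) : Summable fun p : Nat.Primes => ((p : ℕ) : ℝ) ^ (-s) :=
  Nat.Primes.summable_rpow.2 (by linarith)

lemma aux_summ_log {s : ℝ} (hs : 1 < s) :
    Summable fun p : Nat.Primes => -Real.log (1 - ((p : ℕ) : ℝ) ^ (-s)) := by
  refine Summable.of_nonneg_of_le (fun p => ?_) (fun p => ?_) ((aux_summ_u hs).mul_left 2)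
  · obtain ⟨a1, a2, a3⟩ := aux_u p.2 hs.le
    have := Real.log_nonpos (x := 1 - ((p : ℕ) : ℝ) ^ (-s)) (by linarith) (by linarith)
    linarith
  · obtain ⟨a1, a2, a3⟩ := aux_u p.2 hs.le
    have h := aux_phi (u := ((p : ℕ) : ℝ) ^ (-s)) (v := 0) a1.le le_rfl a2
    simp only [sub_zero, Real.log_one, neg_zero] at h
    have := (abs_le.1 h).2
    nlinarith

lemma aux_zeta {s : ℝ} (hs : 1 < s) :
    (riemannZeta s).re =
      Real.exp (∑' p : Nat.Primes, -Real.log (1 - ((p : ℕ) : ℝ) ^ (-s))) := by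
  rw [← riemannZeta_eulerProduct_exp_log (s := (s : ℂ)) (by simpa using hs)]
  have : (∑' p : Nat.Primes, -Complex.log (1 - (p : ℂ) ^ (-(s : ℂ)))) =
      ((∑' p : Nat.Primes, -Real.log (1 - ((p : ℕ) : ℝ) ^ (-s)) : ℝ) : ℂ) := by
    rw [Complex.ofReal_tsum]
    refine tsum_congr fun p => ?_
    obtain ⟨a1, a2, a3⟩ := aux_u p.2 hs.le
    rw [Complex.ofReal_neg, Complex.ofReal_log (by linarith), Complex.ofReal_sub,
      Complex.ofReal_cpow (by positivity)]
    simp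
  rw [this, ← Complex.ofReal_exp, Complex.ofReal_re]

lemma aux_Zpos {s : ℝ} (hs : 1 ≤ s) : 0 < (riemannZeta₁ s).re := by
  rcases hs.eq_or_lt with rfl | hs
  · simp
  · have : (riemannZeta s).re = (s - 1)⁻¹ * (riemannZeta₁ s).re := by
      rw_mod_cast [riemannZeta_eq_inv_sub_mul (by simpa using hs.ne'), Complex.re_ofReal_mul]
    have h2 : 0 < (s - 1)⁻¹ * (riemannZeta₁ s).re := by
      rw [← this, aux_zeta hs]; positivity
    exact (pos_iff_pos_of_mul_pos h2).1 (inv_pos.2 (by linarith))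

lemma aux_lip : ∃ K : ℝ, 0 ≤ K ∧ ∀ s t : ℝ, 1 ≤ s → s ≤ 2 → 1 ≤ t → t ≤ 2 →
    |Real.log (riemannZeta₁ s).re - Real.log (riemannZeta₁ t).re| ≤ K * |s - t| := by
  have hz : ContDiff ℝ 1 (fun s : ℝ => (riemannZeta₁ s).re) := by
    have h1 : ContDiff ℝ 1 riemannZeta₁ :=
      (differentiable_riemannZeta₁.contDiff (n := 1)).restrict_scalars ℝ
    exact Complex.reCLM.contDiff.comp (h1.comp Complex.ofRealCLM.contDiff)
  have hl : ∀ s ∈ Set.Icc (1 : ℝ) 2, ContDiffAt ℝ 1 (fun s : ℝ => Real.log (riemannZeta₁ s).re) s :=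
    fun s hs => hz.contDiffAt.log (aux_Zpos hs.1).ne'
  have hll : LocallyLipschitzOn (Set.Icc (1 : ℝ) 2)
      (fun s : ℝ => Real.log (riemannZeta₁ s).re) := by
    intro s hs
    obtain ⟨K, t, ht, h⟩ := (hl s hs).exists_lipschitzOnWith
    exact ⟨K, t, mem_nhdsWithin_of_mem_nhds ht, h⟩
  obtain ⟨K, hK⟩ := hll.exists_lipschitzOnWith_of_compact isCompact_Icc
  refine ⟨K, K.2, fun s t h1 h2 h3 h4 => ?_⟩
  simpa [Real.dist_eq] using hK.dist_le_mul s ⟨h1, h2⟩ t ⟨h3, h4⟩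

lemma aux_P : ∃ K : ℝ, 0 ≤ K ∧ ∀ s t : ℝ, 1 < s → s ≤ t → t ≤ 2 →
    |((∑' p : Nat.Primes, ((p : ℕ) : ℝ) ^ (-s)) - ∑' p : Nat.Primes, ((p : ℕ) : ℝ) ^ (-t)) -
      (Real.log (t - 1) - Real.log (s - 1))| ≤ K * (t - s) := by
  obtain ⟨K, hK0, hK⟩ := aux_lip
  have hS : Summable fun p : Nat.Primes => ((p : ℕ) : ℝ) ^ (-(3 / 2) : ℝ) :=
    Nat.Primes.summable_rpow.2 (by norm_num)
  refine ⟨K + ∑' p : Nat.Primes, 4 * ((p : ℕ) : ℝ) ^ (-(3 / 2) : ℝ), add_nonneg hK0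
    (tsum_nonneg fun p => by positivity), fun s t hs hst ht => ?_⟩
  have key : ∀ s : ℝ, 1 < s → (∑' p : Nat.Primes, ((p : ℕ) : ℝ) ^ (-s)) + Real.log (s - 1) =
      Real.log (riemannZeta₁ s).re -
      ∑' p : Nat.Primes, (-Real.log (1 - ((p : ℕ) : ℝ) ^ (-s)) - ((p : ℕ) : ℝ) ^ (-s)) := by
    intro s hs
    rw [(aux_summ_log hs).tsum_sub (aux_summ_u hs)]
    have := log_riemannZeta_eq_neg_log_sub_add_ofReal hs
    rw [aux_zeta hs, Real.log_exp] at this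
    linarith
  have ht1 : 1 < t := by linarith
  have k1 := key s hs
  have k2 := key t ht1
  have hE : |(∑' p : Nat.Primes, (-Real.log (1 - ((p : ℕ) : ℝ) ^ (-s)) - ((p : ℕ) : ℝ) ^ (-s))) -
      ∑' p : Nat.Primes, (-Real.log (1 - ((p : ℕ) : ℝ) ^ (-t)) - ((p : ℕ) : ℝ) ^ (-t))| ≤
      (∑' p : Nat.Primes, 4 * ((p : ℕ) : ℝ) ^ (-(3 / 2) : ℝ)) * (t - s) := by
    rw [← ((aux_summ_log hs).sub (aux_summ_u hs)).tsum_sub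
      ((aux_summ_log ht1).sub (aux_summ_u ht1)), ← tsum_mul_right, ← Real.norm_eq_abs]
    exact tsum_of_norm_bounded ((hS.mul_left 4).mul_right _).hasSum
      fun p => aux_term p.2 hs.le hst
  have hZ := hK s t hs.le (by linarith) ht1.le ht
  rw [abs_sub_comm s t, abs_of_nonneg (by linarith : 0 ≤ t - s)] at hZ
  rw [abs_le] at *
  constructor <;> linarith [hZ.1, hZ.2, hE.1, hE.2]

/-- There is a constant `C > 0` such that for all `0 < t₂ < t₁ ≤ 1/4`,
`|∑_p (p^{-1/2-t₁} - p^{-1/2-2t₁})(p^{-1/2-t₂} - p^{-1/2-2t₂})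
  - (log((t₁+2t₂)/(t₁+t₂)) + log((2t₁+t₂)/(2t₁+2t₂)))| ≤ C t₁`. -/
theorem covariance_asymptotic :
    ∃ C : ℝ, 0 < C ∧ ∀ t₁ t₂ : ℝ, 0 < t₂ → t₂ < t₁ → t₁ ≤ 1 / 4 →
      |(∑' p : Nat.Primes,
          (((p : ℕ) : ℝ) ^ (-(1 / 2 : ℝ) - t₁) - ((p : ℕ) : ℝ) ^ (-(1 / 2 : ℝ) - 2 * t₁)) *
          (((p : ℕ) : ℝ) ^ (-(1 / 2 : ℝ) - t₂) - ((p : ℕ) : ℝ) ^ (-(1 / 2 : ℝ) - 2 * t₂))) -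
        (Real.log ((t₁ + 2 * t₂) / (t₁ + t₂)) + Real.log ((2 * t₁ + t₂) / (2 * t₁ + 2 * t₂)))|
        ≤ C * t₁ := by
  obtain ⟨K, hK0, hK⟩ := aux_P
  refine ⟨2 * K + 1, by linarith, fun t₁ t₂ h2 h21 h1 => ?_⟩
  have hsum : (∑' p : Nat.Primes,
      (((p : ℕ) : ℝ) ^ (-(1 / 2 : ℝ) - t₁) - ((p : ℕ) : ℝ) ^ (-(1 / 2 : ℝ) - 2 * t₁)) *
      (((p : ℕ) : ℝ) ^ (-(1 / 2 : ℝ) - t₂) - ((p : ℕ) : ℝ) ^ (-(1 / 2 : ℝ) - 2 * t₂))) =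
      ((∑' p : Nat.Primes, ((p : ℕ) : ℝ) ^ (-(1 + t₁ + t₂))) -
        ∑' p : Nat.Primes, ((p : ℕ) : ℝ) ^ (-(1 + t₁ + 2 * t₂))) -
      ((∑' p : Nat.Primes, ((p : ℕ) : ℝ) ^ (-(1 + 2 * t₁ + t₂))) -
        ∑' p : Nat.Primes, ((p : ℕ) : ℝ) ^ (-(1 + 2 * t₁ + 2 * t₂))) := by
    have s1 := aux_summ_u (s := 1 + t₁ + t₂) (by linarith)
    have s2 := aux_summ_u (s := 1 + t₁ + 2 * t₂) (by linarith)
    have s3 := aux_summ_u (s := 1 + 2 * t₁ + t₂) (by linarith)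
    have s4 := aux_summ_u (s := 1 + 2 * t₁ + 2 * t₂) (by linarith)
    rw [← s1.tsum_sub s2, ← s3.tsum_sub s4, ← (s1.sub s2).tsum_sub (s3.sub s4)]
    refine tsum_congr fun p => ?_
    have hp : (0 : ℝ) < ((p : ℕ) : ℝ) := by exact_mod_cast p.2.pos
    have e : ∀ a b : ℝ, ((p : ℕ) : ℝ) ^ (-(1 + a + b)) =
        ((p : ℕ) : ℝ) ^ (-(1 / 2 : ℝ) - a) * ((p : ℕ) : ℝ) ^ (-(1 / 2 : ℝ) - b) := by
      intro a b
      rw [← Real.rpow_add hp]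
      congr 1; ring
    rw [e, e, e, e]
    ring
  rw [hsum, Real.log_div (by linarith) (by linarith), Real.log_div (by linarith) (by linarith)]
  have a1 := hK (1 + t₁ + t₂) (1 + t₁ + 2 * t₂) (by linarith) (by linarith) (by linarith)
  have a2 := hK (1 + 2 * t₁ + t₂) (1 + 2 * t₁ + 2 * t₂) (by linarith) (by linarith) (by linarith)
  rw [show 1 + t₁ + 2 * t₂ - 1 = t₁ + 2 * t₂ by ring, show 1 + t₁ + t₂ - 1 = t₁ + t₂ by ring,
    show 1 + t₁ + 2 * t₂ - (1 + t₁ + t₂) = t₂ by ring] at a1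
  rw [show 1 + 2 * t₁ + 2 * t₂ - 1 = 2 * t₁ + 2 * t₂ by ring,
    show 1 + 2 * t₁ + t₂ - 1 = 2 * t₁ + t₂ by ring,
    show 1 + 2 * t₁ + 2 * t₂ - (1 + 2 * t₁ + t₂) = t₂ by ring] at a2
  have hm : K * t₂ ≤ K * t₁ := by gcongr
  rw [abs_le] at *
  constructor <;> linarith [a1.1, a1.2, a2.1, a2.2]
end

section
/- Let (t_i) and (s_i) be sequences of positive reals with s_i < t_i for all i, t_i → 0, and s_i / t_i → 0 as i → ∞. Then ∑_p (p^{-1/2-t_i} − p^{-1/2-2t_i})(p^{-1/2-s_i} − p^{-1/2-2s_i}) → 0 as i → ∞, where the sum runs over all primes. -/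
open Filter Topology

open ArithmeticFunction ArithmeticFunction.vonMangoldt Complex LSeries in
lemma vonMangoldt_upper_aux : ∃ C : ℝ, ∀ x : ℝ, x ∈ Set.Ioc (1 : ℝ) 2 →
    (Summable fun n : ℕ => vonMangoldt n / (n : ℝ) ^ x) ∧
    ∑' n : ℕ, vonMangoldt n / (n : ℝ) ^ x ≤ 1 / (x - 1) + C := by
  have ha : IsUnit (1 : ZMod 1) := isUnit_one
  have hres : ∀ n : ℕ, residueClass (1 : ZMod 1) n = vonMangoldt n := fun n => by
    simp only [residueClass, Set.indicator_apply, Set.mem_ofPred_eq]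
    rw [if_pos (Subsingleton.elim _ _)]
  have H {x : ℝ} (hx : 1 < x) :
      ∑' n, residueClass (1 : ZMod 1) n / (n : ℝ) ^ x =
        (LFunctionResidueClassAux (1 : ZMod 1) x).re + (Nat.totient 1 : ℝ)⁻¹ / (x - 1) := by
    refine ofReal_injective ?_
    simp only [ofReal_tsum, ofReal_div, ofReal_cpow (Nat.cast_nonneg _), ofReal_natCast,
      ofReal_add, ofReal_inv, ofReal_sub, ofReal_one]
    simp_rw [← LFunctionResidueClassAux_real ha hx,
      eqOn_LFunctionResidueClassAux ha <| Set.mem_ofPred.mpr (ofReal_re x ▸ hx), sub_add_cancel,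
      LSeries, term]
    refine tsum_congr fun n ↦ ?_
    split_ifs with hn
    · simp only [hn, residueClass_apply_zero, ofReal_zero, zero_div]
    · rfl
  have hcont : ContinuousOn (fun x : ℝ ↦ (LFunctionResidueClassAux (1 : ZMod 1) x).re)
      (Set.Icc 1 2) :=
    continuous_re.continuousOn.comp (t := Set.univ) (continuousOn_LFunctionResidueClassAux 1)
      (fun ⦃x⦄ a ↦ trivial) |>.comp continuous_ofReal.continuousOn fun x hx ↦ by
        simpa only [Set.mem_ofPred_eq, ofReal_re] using hx.1
  obtain ⟨C, hC⟩ := bddAbove_def.mp <| IsCompact.bddAbove_image isCompact_Icc hcont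
  refine ⟨C, fun x hx => ⟨?_, ?_⟩⟩
  · have h := (LSeriesSummable_vonMangoldt (s := (x : ℂ)) (by simpa using hx.1)).norm
    refine h.congr fun n => ?_
    rw [LSeries.norm_term_eq]
    split_ifs with hn
    · simp [hn]
    · simp [abs_of_nonneg vonMangoldt_nonneg]
  · have h1 := H hx.1
    simp only [hres, Nat.totient_one, Nat.cast_one, inv_one] at h1
    have h2 := hC _ (Set.mem_image_of_mem
      (fun x : ℝ ↦ (LFunctionResidueClassAux (1 : ZMod 1) x).re) (Set.mem_Icc_of_Ioc hx))
    rw [h1]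
    linarith

/-- If `0 < s_i < t_i`, `t_i → 0` and `s_i / t_i → 0`, then
`∑_p (p^{-1/2-t_i} - p^{-1/2-2t_i})(p^{-1/2-s_i} - p^{-1/2-2s_i}) → 0`. -/
theorem covariance_tendsto_zero (t s : ℕ → ℝ)
    (hs : ∀ i, 0 < s i) (hst : ∀ i, s i < t i)
    (ht : Tendsto t atTop (𝓝 0))
    (hratio : Tendsto (fun i => s i / t i) atTop (𝓝 0)) :
    Tendsto (fun i => ∑' p : Nat.Primes,
        (((p : ℕ) : ℝ) ^ (-(1 / 2 : ℝ) - t i) - ((p : ℕ) : ℝ) ^ (-(1 / 2 : ℝ) - 2 * t i)) *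
        (((p : ℕ) : ℝ) ^ (-(1 / 2 : ℝ) - s i) - ((p : ℕ) : ℝ) ^ (-(1 / 2 : ℝ) - 2 * s i)))
      atTop (𝓝 0) := by
  obtain ⟨C, hC⟩ := vonMangoldt_upper_aux
  have hs0 : Tendsto s atTop (𝓝 0) :=
    squeeze_zero (fun i => (hs i).le) (fun i => (hst i).le) ht
  have hlim : Tendsto (fun i => s i / t i + s i * C) atTop (𝓝 0) := by
    simpa using hratio.add (hs0.mul_const C)
  have hnn : ∀ i (p : Nat.Primes), 0 ≤
        (((p : ℕ) : ℝ) ^ (-(1 / 2 : ℝ) - t i) - ((p : ℕ) : ℝ) ^ (-(1 / 2 : ℝ) - 2 * t i)) *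
        (((p : ℕ) : ℝ) ^ (-(1 / 2 : ℝ) - s i) - ((p : ℕ) : ℝ) ^ (-(1 / 2 : ℝ) - 2 * s i)) := by
    intro i p
    have hp : (1 : ℝ) ≤ ((p : ℕ) : ℝ) := by exact_mod_cast p.2.one_lt.le
    have h1 := hs i
    have h2 := hst i
    exact mul_nonneg
      (sub_nonneg.2 (Real.rpow_le_rpow_of_exponent_le hp (by linarith)))
      (sub_nonneg.2 (Real.rpow_le_rpow_of_exponent_le hp (by linarith)))
  refine squeeze_zero' (Eventually.of_forall fun i => tsum_nonneg (hnn i)) ?_ hlim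
  filter_upwards [ht.eventually (ge_mem_nhds (zero_lt_one))] with i hi
  have hsi := hs i
  have hti : 0 < t i := hsi.trans (hst i)
  obtain ⟨hsum, hle⟩ := hC (1 + t i) ⟨by linarith, by linarith⟩
  have hinj : Function.Injective (fun p : Nat.Primes => (p : ℕ)) := Subtype.val_injective
  have hsumP := hsum.comp_injective hinj
  have hterm : ∀ p : Nat.Primes,
        (((p : ℕ) : ℝ) ^ (-(1 / 2 : ℝ) - t i) - ((p : ℕ) : ℝ) ^ (-(1 / 2 : ℝ) - 2 * t i)) *
        (((p : ℕ) : ℝ) ^ (-(1 / 2 : ℝ) - s i) - ((p : ℕ) : ℝ) ^ (-(1 / 2 : ℝ) - 2 * s i)) ≤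
        s i * ((fun n : ℕ => ArithmeticFunction.vonMangoldt n / (n : ℝ) ^ (1 + t i)) ∘
          (fun p : Nat.Primes => (p : ℕ))) p := by
    intro p
    have hp1 : (1 : ℝ) ≤ ((p : ℕ) : ℝ) := by exact_mod_cast p.2.one_lt.le
    have hp : (0 : ℝ) < ((p : ℕ) : ℝ) := by linarith
    simp only [Function.comp, ArithmeticFunction.vonMangoldt_apply_prime p.2]
    generalize ((p : ℕ) : ℝ) = x at *
    have hlog : 0 ≤ Real.log x := Real.log_nonneg hp1
    have e1 : x ^ (-(1 / 2 : ℝ) - t i) - x ^ (-(1 / 2 : ℝ) - 2 * t i) ≤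
        x ^ (-(1 / 2 : ℝ) - t i) := by
      have := Real.rpow_nonneg hp.le (-(1 / 2 : ℝ) - 2 * t i)
      linarith
    have e2 : x ^ (-(1 / 2 : ℝ) - s i) - x ^ (-(1 / 2 : ℝ) - 2 * s i) ≤
        x ^ (-(1 / 2 : ℝ)) * (s i * Real.log x) := by
      have a1 : x ^ (-(1 / 2 : ℝ) - 2 * s i) = x ^ (-(1 / 2 : ℝ) - s i) * x ^ (-s i) := by
        rw [← Real.rpow_add hp]; ring_nf
      have a2 : 1 - s i * Real.log x ≤ x ^ (-s i) := by
        rw [Real.rpow_def_of_pos hp]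
        have := Real.add_one_le_exp (Real.log x * -s i)
        linarith
      have a3 : x ^ (-(1 / 2 : ℝ) - s i) ≤ x ^ (-(1 / 2 : ℝ)) :=
        Real.rpow_le_rpow_of_exponent_le hp1 (by linarith)
      have a4 := Real.rpow_nonneg hp.le (-(1 / 2 : ℝ) - s i)
      rw [a1]
      calc _ = x ^ (-(1 / 2 : ℝ) - s i) * (1 - x ^ (-s i)) := by ring
        _ ≤ x ^ (-(1 / 2 : ℝ) - s i) * (s i * Real.log x) := by gcongr; linarith
        _ ≤ _ := by gcongr
    have e3 : 0 ≤ x ^ (-(1 / 2 : ℝ) - s i) - x ^ (-(1 / 2 : ℝ) - 2 * s i) :=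
      sub_nonneg.2 (Real.rpow_le_rpow_of_exponent_le hp1 (by linarith))
    refine (mul_le_mul e1 e2 e3 (Real.rpow_nonneg hp.le _)).trans (le_of_eq ?_)
    have e4 : x ^ (-(1 / 2 : ℝ) - t i) * x ^ (-(1 / 2 : ℝ)) = (x ^ (1 + t i))⁻¹ := by
      rw [← Real.rpow_add hp, ← Real.rpow_neg hp.le]; ring_nf
    rw [← mul_assoc, e4]; ring
  have hsumL := Summable.of_nonneg_of_le (hnn i) hterm (hsumP.mul_left (s i))
  refine (hsumL.tsum_le_tsum hterm (hsumP.mul_left (s i))).trans ?_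
  rw [tsum_mul_left]
  have hcmp := tsum_comp_le_tsum_of_inj hsum
    (fun n => div_nonneg ArithmeticFunction.vonMangoldt_nonneg
      (Real.rpow_nonneg (Nat.cast_nonneg n) _)) hinj
  calc _ ≤ s i * (1 / (1 + t i - 1) + C) := by gcongr; exact hcmp.trans hle
    _ = s i / t i + s i * C := by rw [add_sub_cancel_left]; ring
end
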